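/- Let (G_i,u_i), i ∈ I, be a family of linearly ordered lattice-ordered groups, each u_i a strong unit of G_i; put u = (u_i)_{i∈I} and G = {g ∈ ∏_{i∈I} G_i : ∃ n ∈ ℕ, −n·u ≤ g ≤ n·u}, so that the pseudo MV-algebra M = Γ(G,u) is the direct product of the linearly ordered pseudo MV-algebras Γ(G_i,u_i). If M has a strict square root, then G is two-divisible, i.e., for every g ∈ G there is h ∈ G with h + h = g. -/

import Mathlib

section Core

variable {G : Type} [Lattice G] [AddGroup G]

/-- `u` is a strong unit of the ℓ-group `G`. -/
def IsStrongUnit (u : G) : Prop :=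
  0 ≤ u ∧ ∀ g : G, ∃ n : ℕ, 1 ≤ n ∧ g ≤ n • u

/-- Truncated addition `x ⊕ y = (x + y) ⊓ u` of the pseudo MV-algebra `Γ(G,u)`. -/
def oplus (u x y : G) : G := (x + y) ⊓ u

/-- Left negation `x⁻ = u - x`. -/
def negl (u x : G) : G := u - x

/-- Right negation `x~ = -x + u`. -/
def negr (u x : G) : G := -x + u

/-- `x ⊙ y = (x - u + y) ⊔ 0`. -/
def odot (u x y : G) : G := (x - u + y) ⊔ 0

/-- `r` is a square root on the pseudo MV-algebra `M = Γ(G,u)`: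
it maps `M` to `M` and satisfies (Sq1), (Sq2), (Sq3). -/
def IsSquareRoot (u : G) (r : G → G) : Prop :=
  (∀ x, 0 ≤ x → x ≤ u → 0 ≤ r x ∧ r x ≤ u) ∧
  (∀ x, 0 ≤ x → x ≤ u → odot u (r x) (r x) = x) ∧
  (∀ x y, 0 ≤ x → x ≤ u → 0 ≤ y → y ≤ u → odot u y y ≤ x → y ≤ r x) ∧
  (∀ x, 0 ≤ x → x ≤ u → r (negl u x) = oplus u (negl u (r x)) (r 0)) ∧
  (∀ x, 0 ≤ x → x ≤ u → r (negr u x) = oplus u (r 0) (negr u (r x)))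

/-- `r` is strict: `r 0 = r 0⁻`. -/
def IsStrict (u : G) (r : G → G) : Prop := r 0 = negl u (r 0)

end Core

/-- An additive structure is two-divisible if every element is `h + h` for some `h`. -/
def TwoDivisible (A : Type) [Add A] : Prop := ∀ g : A, ∃ h : A, h + h = g

theorem half_core {A : Type} [AddGroup A] (v w y x : A) (hw : w + w = v)
    (hx : y - v + y = x) (h2 : (v - y + w) - v + (v - y + w) = v - x) :
    ((-w + y) + (-w + y) = x) ∧ AddCommute (-w + y) w := by
  subst hw
  subst hx
  have h3 : w - y + w = (w + w) - y := by
    have h4 : (w + w - y) + (w - y + w) = (w + w - y) + ((w + w) - y) := by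
      calc (w + w - y) + (w - y + w) = (w + w - y + w) - (w + w) + (w + w - y + w) := by
            simp [sub_eq_add_neg, add_assoc]
        _ = _ := h2
        _ = _ := by simp [sub_eq_add_neg, add_assoc]
    exact add_left_cancel h4
  have h5 : -y + w = w + -y := by
    apply add_left_cancel (a := w)
    simpa [sub_eq_add_neg, add_assoc] using h3
  have h6 : AddCommute y w := by
    have : AddCommute (-y) w := h5
    exact AddCommute.neg_left_iff.mp this
  have h7 : AddCommute (-w) y := h6.symm.neg_left
  refine ⟨?_, ?_⟩
  · calc (-w + y) + (-w + y) = (y + -w) + (-w + y) := by rw [h7.eq]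
      _ = _ := by simp [sub_eq_add_neg, add_assoc]
  · exact ((AddCommute.refl w).neg_left).add_left h6

/-- if the direct product `M = Γ(G,u)` of linearly ordered pseudo MV-algebras
`Γ(K i, v i)` has a strict square root, then
`G = {g ∈ ∏ K i : ∃ n, -n•v ≤ g ≤ n•v}` is two-divisible. -/
theorem stmt_4 {ι : Type} (K : ι → Type)
    [∀ i, AddGroup (K i)] [∀ i, LinearOrder (K i)]
    [∀ i, CovariantClass (K i) (K i) (· + ·) (· ≤ ·)]
    [∀ i, CovariantClass (K i) (K i) (Function.swap (· + ·)) (· ≤ ·)]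
    (v : ∀ i, K i) (hv : ∀ i, IsStrongUnit (v i))
    (r : (∀ i, K i) → (∀ i, K i))
    (hr : IsSquareRoot v r) (hs : IsStrict v r)
    (g : ∀ i, K i) (hg : ∃ n : ℕ, ∀ i, -(n • v i) ≤ g i ∧ g i ≤ n • v i) :
    ∃ h : ∀ i, K i, (∃ n : ℕ, ∀ i, -(n • v i) ≤ h i ∧ h i ≤ n • v i) ∧ h + h = g := by
  obtain ⟨hr0, hr1, hr2, hr3, -⟩ := hr
  have hv0 : (0 : ∀ i, K i) ≤ v := fun i => (hv i).1
  have hw : ∀ i, r 0 i + r 0 i = v i := by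
    intro i
    have := congrFun hs i
    simp only [negl, Pi.sub_apply] at this
    exact eq_sub_iff_add_eq.mp this
  have key : ∀ x : ∀ i, K i, 0 ≤ x → x ≤ v → ∀ i,
      r 0 i ≤ r x i ∧ r x i - v i + r x i = x i := by
    intro x hx0 hxv i
    have h0 := hr0 0 le_rfl hv0
    have hle : r 0 ≤ r x := by
      apply hr2 x (r 0) hx0 hxv h0.1 h0.2
      rw [hr1 0 le_rfl hv0]; exact hx0
    refine ⟨hle i, ?_⟩
    have h1 := congrFun (hr1 x hx0 hxv) i
    simp only [odot, Pi.sup_apply, Pi.add_apply, Pi.sub_apply, Pi.zero_apply] at h1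
    rw [sup_eq_left.mpr] at h1
    · exact h1
    · calc (0 : K i) = r 0 i - v i + r 0 i := by rw [← hw i]; simp [sub_eq_add_neg]
        _ ≤ r x i - v i + r x i := by
          rw [sub_eq_add_neg, sub_eq_add_neg]
          exact add_le_add (add_le_add (hle i) le_rfl) (hle i)
  have base : ∀ i, ∀ x : K i, 0 ≤ x → x ≤ v i →
      ∃ h : K i, h + h = x ∧ AddCommute h (r 0 i) := by
    classical
    intro i a ha0 hav
    obtain ⟨x, hx0, hxv, hxi⟩ : ∃ x : ∀ i, K i, 0 ≤ x ∧ x ≤ v ∧ x i = a := by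
      refine ⟨Function.update 0 i a, ?_, ?_, by simp⟩
      · intro j
        by_cases hj : j = i
        · subst hj; simpa using ha0
        · simp [hj]
      · intro j
        by_cases hj : j = i
        · subst hj; simpa using hav
        · simpa [hj] using hv0 j
    have hn0 : 0 ≤ negl v x := fun j => by
      simpa [negl] using hxv j
    have hnv : negl v x ≤ v := fun j => by
      have := hx0 j
      simpa [negl, sub_eq_add_neg] using this
    obtain ⟨k1, k2⟩ := key x hx0 hxv i
    obtain ⟨-, k4⟩ := key _ hn0 hnv i
    have k5 := congrFun (hr3 x hx0 hxv) i
    simp only [oplus, negl, Pi.inf_apply, Pi.add_apply, Pi.sub_apply] at k5 k4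
    rw [inf_eq_left.mpr] at k5
    · change r (v - x) i = _ at k5
      change r (v - x) i - v i + r (v - x) i = _ at k4
      rw [k5] at k4
      rw [hxi] at k2 k4
      exact ⟨_, half_core (v i) (r 0 i) (r x i) a (hw i) k2 k4⟩
    · have : -r x i + r 0 i ≤ 0 := by
        calc -r x i + r 0 i ≤ -r x i + r x i := add_le_add le_rfl k1
          _ = 0 := by simp
      calc v i - r x i + r 0 i = v i + (-r x i + r 0 i) := by
            simp [sub_eq_add_neg, add_assoc]
        _ ≤ v i + 0 := add_le_add le_rfl this
        _ = v i := add_zero _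
  have pos : ∀ i, ∀ N : ℕ, ∀ f : K i, 0 ≤ f → f ≤ N • v i →
      ∃ h : K i, h + h = f ∧ AddCommute h (r 0 i) := by
    intro i N
    induction N with
    | zero =>
      intro f h0 h1
      have : f = 0 := le_antisymm (by simpa using h1) h0
      exact ⟨0, by simp [this], AddCommute.zero_left _⟩
    | succ N ih =>
      intro f h0 h1
      rcases le_total f (v i) with h | h
      · exact base i f h0 h
      · have h2 : f - v i ≤ N • v i := by
          rw [sub_le_iff_le_add, ← succ_nsmul]; exact h1
        obtain ⟨k, hk, hc⟩ := ih (f - v i) (sub_nonneg.mpr h) h2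
        refine ⟨k + r 0 i, ?_, hc.add_left (AddCommute.refl _)⟩
        calc k + r 0 i + (k + r 0 i) = k + (r 0 i + k) + r 0 i := by simp only [add_assoc]
          _ = (k + k) + (r 0 i + r 0 i) := by rw [← hc.eq]; simp only [add_assoc]
          _ = f := by rw [hk, hw]; simp
  have all : ∀ i, ∃ h : K i, h + h = g i := by
    intro i
    rcases le_total 0 (g i) with h | h
    · obtain ⟨n, -, hn⟩ := (hv i).2 (g i)
      obtain ⟨k, hk, -⟩ := pos i n _ h hn
      exact ⟨k, hk⟩
    · obtain ⟨n, -, hn⟩ := (hv i).2 (-g i)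
      obtain ⟨k, hk, -⟩ := pos i n (-g i) (neg_nonneg.mpr h) hn
      exact ⟨-k, by rw [← neg_add_rev, hk, neg_neg]⟩
  choose h hh using all
  obtain ⟨n, hn⟩ := hg
  refine ⟨h, ⟨n, fun i => ?_⟩, funext hh⟩
  have hnv : 0 ≤ n • v i := nsmul_nonneg (hv i).1 n
  obtain ⟨a, b⟩ := hn i
  rw [← hh i] at a b
  constructor
  · by_contra hc
    have hc := not_le.mp hc
    have h0 : h i ≤ 0 := hc.le.trans (neg_nonpos.mpr hnv)
    have : h i + h i ≤ h i + 0 := add_le_add le_rfl h0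
    rw [add_zero] at this
    exact absurd (a.trans this) (not_le.mpr hc)
  · by_contra hc
    have hc := not_le.mp hc
    have h0 : 0 ≤ h i := hnv.trans hc.le
    have : h i + 0 ≤ h i + h i := add_le_add le_rfl h0
    rw [add_zero] at this
    exact absurd (this.trans b) (not_le.mpr hc)
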